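/- Let X be a set, R ⊆ X × X a relation, n ≥ 1, and let ⊥, ⊤ ∈ X and a_1,…,a_n, b_1,…,b_n ∈ X satisfy: (i) (⊥, d) ∈ R for every d ∈ {a_1,…,a_n, b_1,…,b_n, ⊤}; (ii) (d, ⊤) ∈ R for every d ∈ {a_1,…,a_n, b_1,…,b_n}; (iii) (a_i, a_j) ∉ R for all 1 ≤ i < j ≤ n; and (iv) (b_i, b_j) ∉ R for all 1 ≤ i < j ≤ n. Define the sequence x_0 = ⊥, x_i = a_i for 1 ≤ i ≤ n, x_{n+j} = b_j for 1 ≤ j ≤ n, x_{2n+1} = ⊤, and let T be the LWS table on indices 0,…,2n+1 with weights w(i,j) = −1 if (x_i, x_j) ∈ R and w(i,j) = +∞ otherwise. Then T[2n+1] = −3 if there exist i, j ∈ {1,…,n} with (a_i, b_j) ∈ R, and T[2n+1] = −2 otherwise. -/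

import Mathlib

/-!
A cell `T[j]` of the table is the cost of a cheapest path from `0` to `j`, so it is bounded above
by the cost of any path and below by any potential `p` with `p 0 ≤ 0` and `p j ≤ p i + w i j`. For
chain weights the cost of a path is minus its number of edges, and every rank function that strictly
increases along `R` provides the potential `rank 0 - rank`. The four blocks `⊥ | a | b | ⊤` are
forward antichains, meaning that no forward step stays inside a block, so a chain has at most three
edges, attained when some `(a_i, b_j) ∈ R`; if there is no such pair, `a` and `b` merge into a
single forward antichain and only two edges remain possible.
-/

/-- `T` solves the least-weight-subsequence recurrence with weights `w` on the indices `0, …, N`.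
Nothing is required of the values of `T` beyond `N`, or of `w i j` for `j ≤ i`. -/
structure IsLWSTable {M : Type*} [Zero M] [Add M] [SemilatticeInf M] [OrderTop M]
    (w : ℕ → ℕ → M) (N : ℕ) (T : ℕ → M) : Prop where
  zero : T 0 = 0
  eq_inf : ∀ j, 1 ≤ j → j ≤ N → T j = (Finset.range j).inf fun i => T i + w i j

/-- `w` is the weight function of the problem `ChainLWS(R)` on the sequence `x`: a step costs `-1`
along `R` and is forbidden (costs `⊤`) otherwise. -/
structure IsChainWeight {X : Type*} (R : X → X → Prop) (x : ℕ → X) (w : ℕ → ℕ → WithTop ℤ) :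
    Prop where
  of_rel : ∀ i j, R (x i) (x j) → w i j = ((-1 : ℤ) : WithTop ℤ)
  of_not_rel : ∀ i j, ¬ R (x i) (x j) → w i j = ⊤

/-- The block `x (l + 1), …, x u` contains no step of `R` from an earlier to a later entry. Unlike
for a genuine antichain, `R` may relate an entry to itself or to an earlier one: paths in an LWS
table only move forward. -/
def IsForwardAntichain {X : Type*} (R : X → X → Prop) (x : ℕ → X) (l u : ℕ) : Prop :=
  ∀ i j, l < i → i < j → j ≤ u → ¬ R (x i) (x j)

namespace IsForwardAntichain

variable {X : Type*} {R : X → X → Prop} {x y : ℕ → X}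

theorem of_shift {k n : ℕ} (hy : IsForwardAntichain R y 0 n)
    (hxy : ∀ i, 1 ≤ i → i ≤ n → x (k + i) = y i) : IsForwardAntichain R x k (k + n) := by
  intro i j hki hij hjn
  obtain ⟨i, rfl⟩ := Nat.exists_eq_add_of_le hki.le
  obtain ⟨j, rfl⟩ := Nat.exists_eq_add_of_le (hki.trans hij).le
  rw [hxy i (by omega) (by omega), hxy j (by omega) (by omega)]
  exact hy i j (by omega) (by omega) (by omega)

theorem append {l m u : ℕ} (hlm : IsForwardAntichain R x l m) (hmu : IsForwardAntichain R x m u)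
    (hcross : ∀ i j, l < i → i ≤ m → m < j → j ≤ u → ¬ R (x i) (x j)) :
    IsForwardAntichain R x l u := by
  intro i j hli hij hju
  rcases le_or_gt j m with hjm | hmj
  · exact hlm i j hli hij hjm
  rcases le_or_gt i m with him | hmi
  · exact hcross i j hli him hmj hju
  · exact hmu i j hmi hij hju

end IsForwardAntichain

namespace IsLWSTable

section Potential

variable {M : Type*} [Zero M] [Add M] [SemilatticeInf M] [OrderTop M]
  {w : ℕ → ℕ → M} {N : ℕ} {T : ℕ → M}

theorem le_add (hT : IsLWSTable w N T) {i j : ℕ} (hij : i < j) (hj : j ≤ N) :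
    T j ≤ T i + w i j := by
  rw [hT.eq_inf j (by omega) hj]
  exact Finset.inf_le (Finset.mem_range.2 hij)

theorem potential_le [AddRightMono M] (hT : IsLWSTable w N T) {p : ℕ → M} (hp0 : p 0 ≤ 0)
    (hp : ∀ i j, i < j → j ≤ N → p j ≤ p i + w i j) {j : ℕ} (hj : j ≤ N) : p j ≤ T j := by
  induction j using Nat.strong_induction_on with
  | h j ih =>
    rcases Nat.eq_zero_or_pos j with rfl | hpos
    · exact hp0.trans_eq hT.zero.symm
    · rw [hT.eq_inf j hpos hj]
      refine Finset.le_inf fun i hi => ?_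
      have hij : i < j := Finset.mem_range.1 hi
      calc
        p j ≤ p i + w i j := hp i j hij hj
        _ ≤ T i + w i j := by gcongr; exact ih i hij (by omega)

end Potential

section Chain

variable {X : Type*} {R : X → X → Prop} {x : ℕ → X} {w : ℕ → ℕ → WithTop ℤ} {N : ℕ}
  {T : ℕ → WithTop ℤ}

theorem le_sub_one_of_rel (hT : IsLWSTable w N T) (hw : IsChainWeight R x w) {i j : ℕ} {c : ℤ}
    (hi : T i ≤ c) (hR : R (x i) (x j)) (hij : i < j) (hj : j ≤ N) :
    T j ≤ ((c - 1 : ℤ) : WithTop ℤ) :=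
  calc
    T j ≤ T i + w i j := hT.le_add hij hj
    _ ≤ c + w i j := by gcongr
    _ = ((c - 1 : ℤ) : WithTop ℤ) := by rw [hw.of_rel i j hR, ← WithTop.coe_add, sub_eq_add_neg]

theorem rank_sub_rank_le (hT : IsLWSTable w N T) (hw : IsChainWeight R x w) {rank : ℕ → ℤ}
    (hrank : ∀ i j, i < j → j ≤ N → R (x i) (x j) → rank i < rank j) {j : ℕ} (hj : j ≤ N) :
    ((rank 0 - rank j : ℤ) : WithTop ℤ) ≤ T j := by
  refine hT.potential_le (p := fun k => ((rank 0 - rank k : ℤ) : WithTop ℤ)) (by simp) ?_ hj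
  intro i j hij hj
  by_cases hR : R (x i) (x j)
  · have hlt := hrank i j hij hj hR
    rw [hw.of_rel i j hR, ← WithTop.coe_add, WithTop.coe_le_coe]
    omega
  · simp [hw.of_not_rel i j hR]

theorem neg_two_le_of_isForwardAntichain (hT : IsLWSTable w (N + 1) T) (hw : IsChainWeight R x w)
    (hanti : IsForwardAntichain R x 0 N) : ((-2 : ℤ) : WithTop ℤ) ≤ T (N + 1) := by
  let rank : ℕ → ℤ := fun k => (if 0 < k then 1 else 0) + (if N < k then 1 else 0)
  have hrank : ∀ i j, i < j → j ≤ N + 1 → R (x i) (x j) → rank i < rank j := by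
    intro i j hij hj hR
    have hnot_inside := fun hi hj => hanti i j hi hij hj hR
    grind
  simpa [rank] using hT.rank_sub_rank_le hw hrank le_rfl

theorem neg_three_le_of_two_isForwardAntichain {m : ℕ} (hT : IsLWSTable w (N + 1) T)
    (hw : IsChainWeight R x w) (hfst : IsForwardAntichain R x 0 m)
    (hsnd : IsForwardAntichain R x m N) :
    ((-3 : ℤ) : WithTop ℤ) ≤ T (N + 1) := by
  let rank : ℕ → ℤ := fun k =>
    (if 0 < k then 1 else 0) + (if m < k then 1 else 0) + (if N < k then 1 else 0)
  have hrank : ∀ i j, i < j → j ≤ N + 1 → R (x i) (x j) → rank i < rank j := by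
    intro i j hij hj hR
    have hnot_fst := fun hi hj => hfst i j hi hij hj hR
    have hnot_snd := fun hi hj => hsnd i j hi hij hj hR
    grind
  have hlast : -3 ≤ rank 0 - rank (N + 1) := by grind
  exact (WithTop.coe_le_coe.2 hlast).trans (hT.rank_sub_rank_le hw hrank le_rfl)

end Chain

end IsLWSTable

theorem stmt_12_general {X : Type*} (R : X → X → Prop) (n : ℕ) (bot top : X) (a b : ℕ → X)
    (hbota : ∀ i, 1 ≤ i → i ≤ n → R bot (a i))
    (hatop : ∃ i, 1 ≤ i ∧ i ≤ n ∧ R (a i) top)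
    (hbtop : ∀ j, 1 ≤ j → j ≤ n → R (b j) top)
    (hna : ∀ i j, 1 ≤ i → i < j → j ≤ n → ¬ R (a i) (a j))
    (hnb : ∀ i j, 1 ≤ i → i < j → j ≤ n → ¬ R (b i) (b j))
    (x : ℕ → X)
    (hx0 : x 0 = bot)
    (hxa : ∀ i, 1 ≤ i → i ≤ n → x i = a i)
    (hxb : ∀ j, 1 ≤ j → j ≤ n → x (n + j) = b j)
    (hxtop : x (2 * n + 1) = top)
    (w : ℕ → ℕ → WithTop ℤ) (hw : IsChainWeight R x w)
    (T : ℕ → WithTop ℤ) (hT : IsLWSTable w (2 * n + 1) T) :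
    ((∃ i j, 1 ≤ i ∧ i ≤ n ∧ 1 ≤ j ∧ j ≤ n ∧ R (a i) (b j)) →
        T (2 * n + 1) = ((-3 : ℤ) : WithTop ℤ)) ∧
    (¬ (∃ i j, 1 ≤ i ∧ i ≤ n ∧ 1 ≤ j ∧ j ≤ n ∧ R (a i) (b j)) →
        T (2 * n + 1) = ((-2 : ℤ) : WithTop ℤ)) := by
  have hantiA : IsForwardAntichain R x 0 n := by
    simpa using IsForwardAntichain.of_shift (k := 0) hna (by simpa using hxa)
  have hantiB : IsForwardAntichain R x n (2 * n) :=
    two_mul n ▸ IsForwardAntichain.of_shift hnb hxb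
  have hTa : ∀ i, 1 ≤ i → i ≤ n → T i ≤ ((0 - 1 : ℤ) : WithTop ℤ) := fun i hi hin =>
    hT.le_sub_one_of_rel hw (by simp [hT.zero]) (by grind : R (x 0) (x i)) hi (by omega)
  constructor
  · rintro ⟨i, j, hi, hin, hj, hjn, hR⟩
    refine le_antisymm ?_ (hT.neg_three_le_of_two_isForwardAntichain hw hantiA hantiB)
    have hTb : T (n + j) ≤ ((0 - 1 - 1 : ℤ) : WithTop ℤ) :=
      hT.le_sub_one_of_rel hw (hTa i hi hin) (by grind : R (x i) (x (n + j))) (by omega) (by omega)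
    exact hT.le_sub_one_of_rel hw hTb (by grind) (by omega) le_rfl
  · intro hnone
    obtain ⟨i, hi, hin, hR⟩ := hatop
    have hcross : ∀ i j, 0 < i → i ≤ n → n < j → j ≤ 2 * n → ¬ R (x i) (x j) := by
      intro i j hi hin hnj hj hR
      obtain ⟨j, rfl⟩ := Nat.exists_eq_add_of_le hnj.le
      rw [hxa i hi hin, hxb j (by omega) (by omega)] at hR
      exact hnone ⟨i, j, hi, hin, by omega, by omega, hR⟩
    exact le_antisymm
      (hT.le_sub_one_of_rel hw (hTa i hi hin) (by grind) (by omega) le_rfl)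
      (hT.neg_two_le_of_isForwardAntichain hw (hantiA.append hantiB hcross))

/-- In the reduction from `Selection(R)` to `ChainLWS(R)`, with
the sequence `⊥, a_1,…,a_n, b_1,…,b_n, ⊤`, weights `w(i,j) = −1` if
`R(x_i, x_j)` and `+∞` otherwise, and the conditions (i)–(iv), the LWS table
satisfies `T[2n+1] = −3` if some pair `(a_i, b_j) ∈ R` exists, and
`T[2n+1] = −2` otherwise. -/
theorem stmt_12 {X : Type*} (R : X → X → Prop) (n : ℕ) (hn : 1 ≤ n)
    (bot top : X) (a b : ℕ → X)
    (hbota : ∀ i, 1 ≤ i → i ≤ n → R bot (a i))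
    (hbotb : ∀ j, 1 ≤ j → j ≤ n → R bot (b j))
    (hbottop : R bot top)
    (hatop : ∀ i, 1 ≤ i → i ≤ n → R (a i) top)
    (hbtop : ∀ j, 1 ≤ j → j ≤ n → R (b j) top)
    (hna : ∀ i j, 1 ≤ i → i < j → j ≤ n → ¬ R (a i) (a j))
    (hnb : ∀ i j, 1 ≤ i → i < j → j ≤ n → ¬ R (b i) (b j))
    (x : ℕ → X)
    (hx0 : x 0 = bot)
    (hxa : ∀ i, 1 ≤ i → i ≤ n → x i = a i)
    (hxb : ∀ j, 1 ≤ j → j ≤ n → x (n + j) = b j)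
    (hxtop : x (2 * n + 1) = top)
    (w : ℕ → ℕ → WithTop ℤ)
    (hwR : ∀ i j, R (x i) (x j) → w i j = ((-1 : ℤ) : WithTop ℤ))
    (hwN : ∀ i j, ¬ R (x i) (x j) → w i j = ⊤)
    (T : ℕ → WithTop ℤ) (hT0 : T 0 = 0)
    (hT : ∀ j, 1 ≤ j → j ≤ 2 * n + 1 →
      T j = (Finset.range j).inf (fun i => T i + w i j)) :
    ((∃ i j, 1 ≤ i ∧ i ≤ n ∧ 1 ≤ j ∧ j ≤ n ∧ R (a i) (b j)) →
        T (2 * n + 1) = ((-3 : ℤ) : WithTop ℤ)) ∧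
    (¬ (∃ i j, 1 ≤ i ∧ i ≤ n ∧ 1 ≤ j ∧ j ≤ n ∧ R (a i) (b j)) →
        T (2 * n + 1) = ((-2 : ℤ) : WithTop ℤ)) :=
  stmt_12_general R n bot top a b hbota ⟨1, le_rfl, hn, hatop 1 le_rfl hn⟩ hbtop hna hnb
    x hx0 hxa hxb hxtop w ⟨hwR, hwN⟩ T ⟨hT0, hT⟩
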